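/- Semantic typing lemma for application (coeffects): if γ₁·Γ ⊨ M : A^q → B and γ₂·Γ ⊨ V : A and γ ≤co γ₁ + q·γ₂, then γ·Γ ⊨ M V : B. -/

import Mathlib

set_option autoImplicit false

/-- A preordered semiring of grades `(Q, +, 0, ·, 1, ≤co)`,
where `≤co` is a preorder respected by `+` and `·`. -/
structure CoSig (Q : Type) where
  add : Q → Q → Q
  zero : Q
  mul : Q → Q → Q
  one : Q
  le : Q → Q → Prop
  add_assoc : ∀ a b c, add (add a b) c = add a (add b c)
  add_comm : ∀ a b, add a b = add b a
  add_zero : ∀ a, add a zero = a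
  mul_assoc : ∀ a b c, mul (mul a b) c = mul a (mul b c)
  one_mul : ∀ a, mul one a = a
  mul_one : ∀ a, mul a one = a
  zero_mul : ∀ a, mul zero a = zero
  mul_zero : ∀ a, mul a zero = zero
  left_distrib : ∀ a b c, mul a (add b c) = add (mul a b) (mul a c)
  right_distrib : ∀ a b c, mul (add a b) c = add (mul a c) (mul b c)
  le_refl : ∀ a, le a a
  le_trans : ∀ a b c, le a b → le b c → le a c
  add_le_add : ∀ a b c d, le a b → le c d → le (add a c) (add b d)
  mul_le_mul : ∀ a b c d, le a b → le c d → le (mul a c) (mul b d)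

namespace CBPVCo

/-- Pointwise comparison of grade vectors: `γ₁ ≤co γ₂`. -/
def vle {Q : Type} (S : CoSig Q) (γ₁ γ₂ : List Q) : Prop := List.Forall₂ S.le γ₁ γ₂

/-- Pointwise addition of grade vectors. -/
def vadd {Q : Type} (S : CoSig Q) (γ₁ γ₂ : List Q) : List Q := List.zipWith S.add γ₁ γ₂

/-- Pointwise scaling of a grade vector: `q·γ`. -/
def vscale {Q : Type} (S : CoSig Q) (q : Q) (γ : List Q) : List Q := γ.map (S.mul q)

/-- `γ ≤co 0̄`: every entry of the grade vector is discardable. -/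
def leZero {Q : Type} (S : CoSig Q) (γ : List Q) : Prop := ∀ q ∈ γ, S.le q S.zero

mutual
/-- CBPV value types (coeffect version): `unit`, thunks `U B`, positive products. -/
inductive VTy (Q : Type) : Type where
  | unit : VTy Q
  | thunk : CTy Q → VTy Q
  | prod : VTy Q → VTy Q → VTy Q
/-- CBPV computation types (coeffect version): graded functions `A^q → B`,
graded returners `F_q A`, negative products. -/
inductive CTy (Q : Type) : Type where
  | arr : VTy Q → Q → CTy Q → CTy Q
  | F : Q → VTy Q → CTy Q
  | wth : CTy Q → CTy Q → CTy Q
end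

mutual
/-- CBPV values (de Bruijn indices for variables). -/
inductive Val (Q : Type) : Type where
  | var : Nat → Val Q
  | unit : Val Q
  | thunk : Comp Q → Val Q
  | pair : Val Q → Val Q → Val Q
/-- CBPV computations, with grade annotations on binders and on `return`. -/
inductive Comp (Q : Type) : Type where
  | lam : Q → Comp Q → Comp Q
  | app : Comp Q → Val Q → Comp Q
  | force : Val Q → Comp Q
  | split : Q → Val Q → Comp Q → Comp Q
  | cpair : Comp Q → Comp Q → Comp Q
  | fst : Comp Q → Comp Q
  | snd : Comp Q → Comp Q
  | ret : Q → Val Q → Comp Q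
  | letin : Q → Comp Q → Comp Q → Comp Q
end

/-- Closed values: closures (capturing a grade vector and an environment),
unit, and pairs of closed values. -/
inductive CloVal (Q : Type) : Type where
  | clo : List Q → List (CloVal Q) → Comp Q → CloVal Q
  | unit : CloVal Q
  | pair : CloVal Q → CloVal Q → CloVal Q

/-- Closed terminal computations. -/
inductive Terminal (Q : Type) : Type where
  | ret : Q → CloVal Q → Terminal Q
  | lamClo : List Q → List (CloVal Q) → Q → Comp Q → Terminal Q
  | cpairClo : List Q → List (CloVal Q) → Comp Q → Comp Q → Terminal Q

/-- The coeffect-instrumented value judgment `γ·ρ ⊢ V ⇓ W`. -/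
inductive EvalVal {Q : Type} (S : CoSig Q) :
    List Q → List (CloVal Q) → Val Q → CloVal Q → Prop where
  | var : ∀ {γ : List Q} {ρ : List (CloVal Q)} {x : Nat} {q : Q} {W : CloVal Q},
      γ.length = ρ.length → ρ[x]? = some W → γ[x]? = some q → S.le q S.one →
      (∀ (i : Nat) (q' : Q), i ≠ x → γ[i]? = some q' → S.le q' S.zero) →
      EvalVal S γ ρ (.var x) W
  | unit : ∀ {γ : List Q} {ρ : List (CloVal Q)},
      γ.length = ρ.length → leZero S γ → EvalVal S γ ρ .unit .unit
  | thunk : ∀ {γ γ' : List Q} {ρ : List (CloVal Q)} {M : Comp Q},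
      vle S γ γ' → EvalVal S γ ρ (.thunk M) (.clo γ' ρ M)
  | pair : ∀ {γ γ₁ γ₂ : List Q} {ρ : List (CloVal Q)} {V₁ V₂ : Val Q} {W₁ W₂ : CloVal Q},
      EvalVal S γ₁ ρ V₁ W₁ → EvalVal S γ₂ ρ V₂ W₂ → vle S γ (vadd S γ₁ γ₂) →
      EvalVal S γ ρ (.pair V₁ V₂) (.pair W₁ W₂)

/-- The coeffect-instrumented big-step judgment `γ·ρ ⊢ M ⇓ T`. -/
inductive EvalComp {Q : Type} (S : CoSig Q) :
    List Q → List (CloVal Q) → Comp Q → Terminal Q → Prop where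
  | lam : ∀ {γ γ' : List Q} {ρ : List (CloVal Q)} {q : Q} {M : Comp Q},
      vle S γ γ' → EvalComp S γ ρ (.lam q M) (.lamClo γ' ρ q M)
  | cpair : ∀ {γ γ' : List Q} {ρ : List (CloVal Q)} {M₁ M₂ : Comp Q},
      vle S γ γ' → EvalComp S γ ρ (.cpair M₁ M₂) (.cpairClo γ' ρ M₁ M₂)
  | ret : ∀ {γ γ₁ : List Q} {ρ : List (CloVal Q)} {q : Q} {V : Val Q} {W : CloVal Q},
      EvalVal S γ₁ ρ V W → vle S γ (vscale S q γ₁) →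
      EvalComp S γ ρ (.ret q V) (.ret q W)
  | app : ∀ {γ γ₁ γ₂ γ' : List Q} {ρ ρ' : List (CloVal Q)} {M M' : Comp Q}
      {V : Val Q} {W : CloVal Q} {q : Q} {T : Terminal Q},
      EvalComp S γ₁ ρ M (.lamClo γ' ρ' q M') → EvalVal S γ₂ ρ V W →
      EvalComp S (q :: γ') (W :: ρ') M' T → vle S γ (vadd S γ₁ (vscale S q γ₂)) →
      EvalComp S γ ρ (.app M V) T
  | force : ∀ {γ γ' : List Q} {ρ ρ' : List (CloVal Q)} {V : Val Q} {M : Comp Q} {T : Terminal Q},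
      EvalVal S γ ρ V (.clo γ' ρ' M) → EvalComp S γ' ρ' M T → EvalComp S γ ρ (.force V) T
  | letin : ∀ {γ γ₁ γ₂ : List Q} {ρ : List (CloVal Q)} {q₁ q₂ : Q} {M N : Comp Q}
      {W : CloVal Q} {T : Terminal Q},
      EvalComp S γ₁ ρ M (.ret q₁ W) → EvalComp S (S.mul q₁ q₂ :: γ₂) (W :: ρ) N T →
      vle S γ (vadd S (vscale S q₂ γ₁) γ₂) → EvalComp S γ ρ (.letin q₂ M N) T
  | split : ∀ {γ γ₁ γ₂ : List Q} {ρ : List (CloVal Q)} {q : Q} {V : Val Q}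
      {W₁ W₂ : CloVal Q} {N : Comp Q} {T : Terminal Q},
      EvalVal S γ₁ ρ V (.pair W₁ W₂) → EvalComp S (q :: q :: γ₂) (W₂ :: W₁ :: ρ) N T →
      vle S γ (vadd S (vscale S q γ₁) γ₂) → EvalComp S γ ρ (.split q V N) T
  | fst : ∀ {γ γ' : List Q} {ρ ρ' : List (CloVal Q)} {M M₁ M₂ : Comp Q} {T : Terminal Q},
      EvalComp S γ ρ M (.cpairClo γ' ρ' M₁ M₂) → EvalComp S γ' ρ' M₁ T →
      EvalComp S γ ρ (.fst M) T
  | snd : ∀ {γ γ' : List Q} {ρ ρ' : List (CloVal Q)} {M M₁ M₂ : Comp Q} {T : Terminal Q},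
      EvalComp S γ ρ M (.cpairClo γ' ρ' M₁ M₂) → EvalComp S γ' ρ' M₂ T →
      EvalComp S γ ρ (.snd M) T

mutual
/-- The logical relation on closed values: `W ∈ 𝒲⟦A⟧`. -/
def WRel {Q : Type} (S : CoSig Q) : VTy Q → CloVal Q → Prop
  | .unit, W => W = CloVal.unit
  | .thunk B, W => ∃ (γ : List Q) (ρ : List (CloVal Q)) (M : Comp Q),
      W = CloVal.clo γ ρ M ∧ ∃ (T : Terminal Q), EvalComp S γ ρ M T ∧ TRel S B T
  | .prod A₁ A₂, W => ∃ (W₁ W₂ : CloVal Q), W = CloVal.pair W₁ W₂ ∧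
      WRel S A₁ W₁ ∧ WRel S A₂ W₂

/-- The logical relation on closed terminals: `T ∈ 𝒯⟦B⟧`. -/
def TRel {Q : Type} (S : CoSig Q) : CTy Q → Terminal Q → Prop
  | .F q A, T => ∃ (W : CloVal Q), T = Terminal.ret q W ∧ WRel S A W
  | .arr A q B, T => ∃ (γ : List Q) (ρ : List (CloVal Q)) (M : Comp Q),
      T = Terminal.lamClo γ ρ q M ∧
      ∀ (W : CloVal Q), WRel S A W →
        ∃ (T' : Terminal Q), EvalComp S (q :: γ) (W :: ρ) M T' ∧ TRel S B T'
  | .wth B₁ B₂, T => ∃ (γ : List Q) (ρ : List (CloVal Q)) (M₁ M₂ : Comp Q),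
      T = Terminal.cpairClo γ ρ M₁ M₂ ∧
      (∃ (T' : Terminal Q), EvalComp S γ ρ M₁ T' ∧ TRel S B₁ T') ∧
      (∃ (T' : Terminal Q), EvalComp S γ ρ M₂ T' ∧ TRel S B₂ T')
end

/-- The logical relation on computations with graded environments: `(γ·ρ, M) ∈ ℳ⟦B⟧`. -/
def MRel {Q : Type} (S : CoSig Q) (B : CTy Q) (γ : List Q) (ρ : List (CloVal Q))
    (M : Comp Q) : Prop :=
  ∃ (T : Terminal Q), EvalComp S γ ρ M T ∧ TRel S B T

/-- The logical relation on values with graded environments: `(γ·ρ, V) ∈ 𝒱⟦A⟧`. -/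
def VRel {Q : Type} (S : CoSig Q) (A : VTy Q) (γ : List Q) (ρ : List (CloVal Q))
    (V : Val Q) : Prop :=
  ∃ (W : CloVal Q), EvalVal S γ ρ V W ∧ WRel S A W

/-- Semantic typing of environments: `Γ ⊨ ρ` — the environment maps every
variable in the domain of `Γ` to a closed value of the expected type. -/
def EnvOk {Q : Type} (S : CoSig Q) (Γ : List (VTy Q)) (ρ : List (CloVal Q)) : Prop :=
  Γ.length = ρ.length ∧
  ∀ (x : Nat) (A : VTy Q), Γ[x]? = some A →
    ∃ (W : CloVal Q), ρ[x]? = some W ∧ WRel S A W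

/-- Semantic typing of values: `γ·Γ ⊨ V : A`. -/
def VSem {Q : Type} (S : CoSig Q) (γ : List Q) (Γ : List (VTy Q)) (V : Val Q)
    (A : VTy Q) : Prop :=
  ∀ (ρ : List (CloVal Q)), EnvOk S Γ ρ → VRel S A γ ρ V

/-- Semantic typing of computations: `γ·Γ ⊨ M : B`. -/
def CSem {Q : Type} (S : CoSig Q) (γ : List Q) (Γ : List (VTy Q)) (M : Comp Q)
    (B : CTy Q) : Prop :=
  ∀ (ρ : List (CloVal Q)), EnvOk S Γ ρ → MRel S B γ ρ M

/-- Semantic typing lemma for application (coeffects): if `γ₁·Γ ⊨ M : A^q → B`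
and `γ₂·Γ ⊨ V : A` and `γ ≤co γ₁ + q·γ₂`, then `γ·Γ ⊨ M V : B`. -/
theorem semantic_app {Q : Type} (S : CoSig Q) {γ γ₁ γ₂ : List Q} {Γ : List (VTy Q)}
    {M : Comp Q} {V : Val Q} {A : VTy Q} {q : Q} {B : CTy Q}
    (hM : CSem S γ₁ Γ M (.arr A q B)) (hV : VSem S γ₂ Γ V A)
    (hγ : vle S γ (vadd S γ₁ (vscale S q γ₂))) :
    CSem S γ Γ (.app M V) B := by
  intro ρ hρ
  obtain ⟨T, hT, hTR⟩ := hM ρ hρ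
  obtain ⟨W, hW, hWR⟩ := hV ρ hρ
  rw [TRel] at hTR
  obtain ⟨γ', ρ', M', rfl, h⟩ := hTR
  obtain ⟨T', hT', hR⟩ := h W hWR
  exact ⟨T', EvalComp.app hT hW hT' hγ, hR⟩

end CBPVCo
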